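/- Let q = r^2 with r an odd prime power. Suppose q − 1 = e_1 f_1 = e_2 f_2, there exists an integer l ≥ 2 with e_1 ≡ 2^l (mod 2^{l+1}) and 2^l | e_2, and that 2e_2 | e_1(r+1) and e_1 | e_2(r−1). Let s, t be integers with 1 ≤ s ≤ D_1 and 1 ≤ t ≤ D_2, and set n_1 = s·f_1 + t·f_2. If the integer t·e_1(r+1)/(2e_2) + t(r+1)/2 is even, (t−1)(r+1)/2 is even, and n_1 is odd, then for every integer k with 1 ≤ k ≤ (n_1+1)/2 − 1 there exists an [n_1+1, k] MDS self-orthogonal code over F_q, i.e., a linear code C ⊆ F_q^{n_1+1} with dim C = k, C ⊆ C⊥, and minimum Hamming distance (n_1+1) − k + 1. -/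

import Mathlib

/-- The Euclidean dual of a linear code `C ⊆ F^n`. -/
def dualCode {F : Type*} [Field F] {n : ℕ} (C : Submodule F (Fin n → F)) :
    Submodule F (Fin n → F) where
  carrier := {x | ∀ c ∈ C, ∑ i, x i * c i = 0}
  add_mem' := by
    intro a b ha hb c hc
    simp only [Set.mem_setOf_eq] at ha hb ⊢
    simp [Pi.add_apply, add_mul, Finset.sum_add_distrib, ha c hc, hb c hc]
  zero_mem' := by intro c hc; simp
  smul_mem' := by
    intro r a ha c hc
    simp only [Set.mem_setOf_eq] at ha ⊢
    simp [Pi.smul_apply, smul_eq_mul, mul_assoc, ← Finset.mul_sum, ha c hc]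

/-- `C` has minimum Hamming distance `d`. -/
def IsMinDist {F : Type*} [Field F] [DecidableEq F] {n : ℕ}
    (C : Submodule F (Fin n → F)) (d : ℕ) : Prop :=
  (∀ c ∈ C, c ≠ 0 → d ≤ hammingNorm c) ∧ ∃ c ∈ C, c ≠ 0 ∧ hammingNorm c = d

/-!
Let `N = (q - 1) / gcd e₁ e₂`. The nodes of the code are the `x` with `x ^ f₁` in a set of `s` roots
of `X ^ D₁ = 1` and those with `x ^ f₂` in a set of `t` roots of `X ^ D₂ = -1`; the two families are
told apart by `x ^ N = 1` and `x ^ N = -1`. The `f₁`-th power of a node lies in the subfield of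
order `r`, all of whose elements are squares in `F`, while its `f₂`-th power has norm one over this
subfield, and the two parity conditions make the products of differences of such powers squares as
well. Hence the derivative of the polynomial vanishing on the nodes takes square values there, and
the column multipliers of an extended generalized Reed–Solomon code can be chosen so that, by
Lagrange interpolation, the code is self-orthogonal.
-/

section

open Polynomial Finset Lagrange

/-- There is an `[n, k]` MDS self-orthogonal code over `F`. -/
def HasMDSSelfOrthogonalCode (F : Type*) [Field F] [DecidableEq F] (n k : ℕ) : Prop :=
  ∃ C : Submodule F (Fin n → F),
    Module.finrank F C = k ∧ C ≤ dualCode C ∧ IsMinDist C (n - k + 1)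

section ExtendedGRS

variable {F : Type*} [Field F] {n k : ℕ} {a v : Fin n → F} {w : F}

/-- The encoder of the extended generalized Reed–Solomon code with nodes `a`, column multipliers
`v` and multiplier `w` at infinity. The last coordinate is `w` times the coefficient of
`X ^ (k - 1)`, which is the value at infinity of a polynomial of degree less than `k`. -/
noncomputable def extGRSEncode (a v : Fin n → F) (w : F) (k : ℕ) : F[X] →ₗ[F] (Fin (n + 1) → F) :=
  LinearMap.pi (Fin.snoc (α := fun _ ↦ F[X] →ₗ[F] F) (fun i ↦ v i • leval (a i))
    (w • lcoeff F (k - 1)))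

@[simp]
lemma extGRSEncode_castSucc (p : F[X]) (i : Fin n) :
    extGRSEncode a v w k p i.castSucc = v i * p.eval (a i) := by
  simp [extGRSEncode]

@[simp]
lemma extGRSEncode_last (p : F[X]) :
    extGRSEncode a v w k p (Fin.last n) = w * p.coeff (k - 1) := by
  simp [extGRSEncode]

/-- The extended generalized Reed–Solomon code of dimension `k`: the words encoding the polynomials
of degree less than `k`. -/
noncomputable def extGRSCode (a v : Fin n → F) (w : F) (k : ℕ) : Submodule F (Fin (n + 1) → F) :=
  (degreeLT F k).map (extGRSEncode a v w k)

section Distance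

variable [DecidableEq F]

lemma hammingNorm_extGRSEncode_add_card_zeros (hv : ∀ i, v i ≠ 0) (hw : w ≠ 0) (p : F[X]) :
    hammingNorm (extGRSEncode a v w k p) + #{i | p.eval (a i) = 0}
      + (if p.coeff (k - 1) = 0 then 1 else 0) = n + 1 := by
  have hsplit := card_filter_add_card_filter_not (s := (univ : Finset (Fin n)))
    (fun i ↦ p.eval (a i) = 0)
  rw [card_univ, Fintype.card_fin] at hsplit
  rw [hammingNorm, card_filter, Fin.sum_univ_castSucc, ← card_filter]
  simp only [extGRSEncode_castSucc, extGRSEncode_last, ne_eq, mul_eq_zero, hv, hw, false_or]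
  split_ifs <;> simp_all <;> omega

lemma card_zeros_le_natDegree (ha : Function.Injective a) {p : F[X]} (hp : p ≠ 0) :
    #{i | p.eval (a i) = 0} ≤ p.natDegree := by
  rw [← card_image_of_injective _ ha]
  refine card_le_degree_of_subset_roots fun x hx ↦ ?_
  obtain ⟨i, hi, rfl⟩ := mem_image.1 (mem_def.2 hx)
  exact (mem_roots hp).2 (mem_filter.1 hi).2

lemma lt_hammingNorm_extGRSEncode_add (ha : Function.Injective a) (hv : ∀ i, v i ≠ 0) (hw : w ≠ 0)
    {p : F[X]} (hp : p ∈ degreeLT F k) (hp0 : p ≠ 0) :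
    n + 1 < hammingNorm (extGRSEncode a v w k p) + k := by
  have hdeg : p.natDegree < k := (natDegree_lt_iff_degree_lt hp0).2 (mem_degreeLT.1 hp)
  have hzeros := card_zeros_le_natDegree ha hp0
  have hnorm := hammingNorm_extGRSEncode_add_card_zeros (a := a) (k := k) hv hw p
  split_ifs at hnorm with hcoeff
  · have : p.natDegree ≠ k - 1 := fun h ↦ hp0 (leadingCoeff_eq_zero.1 (by rwa [leadingCoeff, h]))
    omega
  · omega

lemma isMinDist_extGRSCode (ha : Function.Injective a) (hv : ∀ i, v i ≠ 0) (hw : w ≠ 0)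
    (hk : 1 ≤ k) (hkn : k ≤ n + 1) : IsMinDist (extGRSCode a v w k) (n + 1 - k + 1) := by
  constructor
  · rintro _ ⟨p, hp, rfl⟩ hne
    have := lt_hammingNorm_extGRSEncode_add ha hv hw hp (by rintro rfl; exact hne (map_zero _))
    omega
  · obtain ⟨T, -, hT⟩ := exists_subset_card_eq (s := (univ : Finset (Fin n))) (n := k - 1)
      (by rw [card_univ, Fintype.card_fin]; omega)
    have hmem : nodal T a ∈ degreeLT F k := by
      rw [mem_degreeLT, degree_nodal, hT]
      exact_mod_cast (by omega : k - 1 < k)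
    have hlower := lt_hammingNorm_extGRSEncode_add ha hv hw hmem nodal_ne_zero
    have hnorm := hammingNorm_extGRSEncode_add_card_zeros (a := a) (k := k) hv hw (nodal T a)
    have hzeros : #T ≤ #{i | (nodal T a).eval (a i) = 0} :=
      card_le_card fun i hi ↦ mem_filter.2 ⟨mem_univ i, eval_nodal_at_node hi⟩
    refine ⟨_, Submodule.mem_map_of_mem hmem, ?_, by omega⟩
    rw [← hammingNorm_ne_zero_iff]
    omega

end Distance

lemma finrank_extGRSCode (ha : Function.Injective a) (hv : ∀ i, v i ≠ 0) (hw : w ≠ 0)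
    (hkn : k ≤ n + 1) : Module.finrank F (extGRSCode a v w k) = k := by
  classical
  have hinj : Function.Injective ((extGRSEncode a v w k).domRestrict (degreeLT F k)) := by
    refine (injective_iff_map_eq_zero _).2 fun ⟨p, hp⟩ henc ↦ ?_
    rw [LinearMap.domRestrict_apply] at henc
    by_contra hp0
    have hnorm := lt_hammingNorm_extGRSEncode_add ha hv hw hp fun h ↦ hp0 (Subtype.ext h)
    rw [henc, hammingNorm_zero] at hnorm
    omega
  rw [extGRSCode, ← LinearMap.range_domRestrict, LinearMap.finrank_range_of_inj hinj,
    (degreeLTEquiv F k).finrank_eq, Module.finrank_fin_fun]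

/-- By Lagrange interpolation, both sides are the coefficient of `X ^ (n - 1)` in
`p * g * X ^ (n + 1 - 2 * k)`. -/
lemma sum_nodalWeight_mul_eval_mul_eval (ha : Function.Injective a) (hk : 1 ≤ k)
    (hkn : 2 * k ≤ n + 1) {p g : F[X]} (hp : p ∈ degreeLT F k) (hg : g ∈ degreeLT F k) :
    ∑ i, nodalWeight univ a i * a i ^ (n + 1 - 2 * k) * (p.eval (a i) * g.eval (a i))
      = p.coeff (k - 1) * g.coeff (k - 1) := by
  obtain ⟨m, rfl⟩ : ∃ m, k = m + 1 := ⟨k - 1, by omega⟩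
  rw [degreeLT_succ_eq_degreeLE, mem_degreeLE, ← natDegree_le_iff_degree_le] at hp hg
  have hdeg : (p * g * X ^ (n + 1 - 2 * (m + 1))).natDegree ≤ m + m + (n + 1 - 2 * (m + 1)) :=
    natDegree_mul_le_of_le (natDegree_mul_le_of_le hp hg) (natDegree_X_pow_le _)
  have hdeg' : (p * g * X ^ (n + 1 - 2 * (m + 1))).degree
      < ((#(univ : Finset (Fin n)) : ℕ) : WithBot ℕ) := by
    rw [card_univ, Fintype.card_fin]
    exact (degree_le_of_natDegree_le hdeg).trans_lt (Nat.cast_lt.2 (by omega))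
  have hcoeff := Lagrange.coeff_eq_sum (s := univ) (v := a) ha.injOn hdeg'
  rw [card_univ, Fintype.card_fin, show n - 1 = (m + m) + (n + 1 - 2 * (m + 1)) by omega,
    coeff_mul_X_pow, coeff_mul_add_eq_of_natDegree_le hp hg] at hcoeff
  rw [Nat.add_sub_cancel, hcoeff]
  refine sum_congr rfl fun i _ ↦ ?_
  rw [nodalWeight, prod_inv_distrib, eval_mul, eval_mul, eval_pow, eval_X]
  ring

lemma extGRSCode_le_dualCode (ha : Function.Injective a) (hk : 1 ≤ k) (hkn : 2 * k ≤ n + 1)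
    (hv : ∀ i, v i * v i = nodalWeight univ a i * a i ^ (n + 1 - 2 * k)) (hw : w * w = -1) :
    extGRSCode a v w k ≤ dualCode (extGRSCode a v w k) := by
  rintro _ ⟨p, hp, rfl⟩ _ ⟨g, hg, rfl⟩
  have hsum : ∑ i, v i * p.eval (a i) * (v i * g.eval (a i))
      = p.coeff (k - 1) * g.coeff (k - 1) := by
    rw [← sum_nodalWeight_mul_eval_mul_eval ha hk hkn hp hg]
    refine sum_congr rfl fun i _ ↦ ?_
    rw [← hv, mul_mul_mul_comm]
  rw [Fin.sum_univ_castSucc]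
  simp only [extGRSEncode_castSucc, extGRSEncode_last, hsum]
  linear_combination p.coeff (k - 1) * g.coeff (k - 1) * hw

end ExtendedGRS

lemma nodal_univ_eq_of_equiv {R ι : Type*} [CommRing R] [Fintype ι] {S : Finset R} (e : ι ≃ S) :
    nodal univ (fun i ↦ (e i : R)) = nodal S id := by
  rw [nodal, nodal, ← prod_coe_sort S]
  exact e.prod_comp fun x : S ↦ X - C (x : R)

theorem hasMDSSelfOrthogonalCode_of_isSquare {F : Type*} [Field F] [DecidableEq F] {S : Finset F}
    {k : ℕ} (hS0 : 0 ∉ S) (hSsq : ∀ x ∈ S, IsSquare x)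
    (hSder : ∀ x ∈ S, IsSquare ((derivative (nodal S id)).eval x)) (hneg : IsSquare (-1 : F))
    (hk : 1 ≤ k) (hkn : 2 * k ≤ #S + 1) : HasMDSSelfOrthogonalCode F (#S + 1) k := by
  let a : Fin #S → F := fun i ↦ S.equivFin.symm i
  have ha : Function.Injective a := Subtype.val_injective.comp S.equivFin.symm.injective
  have haS (i) : a i ∈ S := (S.equivFin.symm i).2
  have ha0 (i) : a i ≠ 0 := ne_of_mem_of_not_mem (haS i) hS0
  have hmul (i) : IsSquare (nodalWeight univ a i * a i ^ (#S + 1 - 2 * k)) := by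
    rw [nodalWeight_eq_eval_derivative_nodal (mem_univ i), nodal_univ_eq_of_equiv]
    exact (hSder _ (haS i)).inv.mul ((hSsq _ (haS i)).pow _)
  choose v hv using hmul
  obtain ⟨w, hw⟩ := hneg
  have hv0 (i) : v i ≠ 0 := fun h ↦ mul_ne_zero (nodalWeight_ne_zero ha.injOn (mem_univ i))
    (pow_ne_zero _ (ha0 i)) (by rw [hv, h, zero_mul])
  have hw0 : w ≠ 0 := by
    rintro rfl
    simp at hw
  exact ⟨extGRSCode a v w k, finrank_extGRSCode ha hv0 hw0 (by omega),
    extGRSCode_le_dualCode ha hk hkn (fun i ↦ (hv i).symm) hw.symm,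
    isMinDist_extGRSCode ha hv0 hw0 hk (by omega)⟩

section PowPreimage

variable {F : Type*} [Field F] [Fintype F] [DecidableEq F]

/-- The elements of a finite field whose `f`-th power lies in `T`. For `T` a set of `f`-th powers of
units this is a union of cosets of the group of `f`-th roots of unity. -/
def powPreimage (f : ℕ) (T : Finset F) : Finset F := {x | x ^ f ∈ T}

@[simp]
lemma mem_powPreimage {f : ℕ} {T : Finset F} {x : F} : x ∈ powPreimage f T ↔ x ^ f ∈ T := by
  simp [powPreimage]

lemma nodal_roots_of_dvd_X_pow_card_sub_X {P : F[X]} (hP : P.Monic)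
    (hdvd : P ∣ X ^ Fintype.card F - X) : nodal {x | P.eval x = 0} id = P := by
  have hne : (X ^ Fintype.card F - X : F[X]) ≠ 0 :=
    FiniteField.X_pow_card_sub_X_ne_zero F Fintype.one_lt_card
  have hroots := FiniteField.roots_X_pow_card_sub_X F
  have hsplits : P.Splits := by
    refine Splits.of_dvd (splits_iff_card_roots.2 ?_) hne hdvd
    rw [hroots, FiniteField.X_pow_card_sub_X_natDegree_eq F Fintype.one_lt_card]
    rfl
  have hnodup : P.roots.Nodup :=
    Multiset.nodup_of_le (roots.le_of_dvd hne hdvd) (hroots ▸ univ.nodup)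
  have hval : ({x | P.eval x = 0} : Finset F).val = P.roots := by
    rw [← hnodup.dedup, ← Multiset.toFinset_val]
    congr 1
    ext x
    simp [hP.ne_zero]
  conv_rhs => rw [hsplits.eq_prod_roots_of_monic hP, ← hval]
  rfl

lemma nodal_dvd_X_pow_sub_one {R : Type*} [CommRing R] [IsDomain R] {e : ℕ} (he : 0 < e)
    {T : Finset R} (hT : ∀ c ∈ T, c ^ e = 1) : nodal T id ∣ X ^ e - 1 := by
  have hne : (X ^ e - 1 : R[X]) ≠ 0 := X_pow_sub_C_ne_zero he 1
  refine (Multiset.prod_X_sub_C_dvd_iff_le_roots hne T.val).2 <|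
    (Multiset.le_iff_subset T.nodup).2 fun c hc ↦ ?_
  simp [mem_roots hne, hT c hc]

variable {e f : ℕ} {T : Finset F}

/-- The right-hand side divides `X ^ (e * f) - 1`, so it is the product of `X - x` over its
roots. -/
lemma nodal_powPreimage (hef : e * f = Fintype.card F - 1) (hT : ∀ c ∈ T, c ^ e = 1) :
    nodal (powPreimage f T) id = (nodal T id).comp (X ^ f) := by
  have hpos : 0 < e * f := hef ▸ Nat.sub_pos_of_lt Fintype.one_lt_card
  have hmonic : ((nodal T (id : F → F)).comp (X ^ f)).Monic :=
    nodal_monic.comp (monic_X_pow f)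
      (by simpa using (Nat.pos_of_mul_pos_left hpos).ne')
  have hdvd : (nodal T id).comp (X ^ f) ∣ (X ^ Fintype.card F - X : F[X]) := by
    obtain ⟨Q, hQ⟩ := nodal_dvd_X_pow_sub_one (Nat.pos_of_mul_pos_right hpos) hT
    refine ⟨Q.comp (X ^ f) * X, ?_⟩
    rw [← mul_assoc, ← mul_comp, ← hQ, sub_comp, X_pow_comp, one_comp, ← pow_mul, mul_comm f, hef,
      sub_one_mul, ← pow_succ, Nat.sub_add_cancel Fintype.card_pos]
  rw [← nodal_roots_of_dvd_X_pow_card_sub_X hmonic hdvd]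
  congr 1
  ext x
  simp [eval_nodal, prod_eq_zero_iff, sub_eq_zero]

lemma card_powPreimage (hef : e * f = Fintype.card F - 1) (hT : ∀ c ∈ T, c ^ e = 1) :
    #(powPreimage f T) = #T * f := by
  have hdeg := congrArg natDegree (nodal_powPreimage hef hT)
  rwa [natDegree_comp, natDegree_X_pow, natDegree_nodal, natDegree_nodal] at hdeg

lemma eval_nodal_powPreimage (hef : e * f = Fintype.card F - 1) (hT : ∀ c ∈ T, c ^ e = 1) (x : F) :
    (nodal (powPreimage f T) id).eval x = (nodal T id).eval (x ^ f) := by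
  rw [nodal_powPreimage hef hT, eval_comp, eval_pow, eval_X]

lemma eval_derivative_nodal_powPreimage (hef : e * f = Fintype.card F - 1)
    (hT : ∀ c ∈ T, c ^ e = 1) {x : F} (hx : x ^ f ∈ T) :
    (derivative (nodal (powPreimage f T) id)).eval x
      = f * x ^ (f - 1) * (nodal (T.erase (x ^ f)) id).eval (x ^ f) := by
  have hder := eval_nodal_derivative_eval_node_eq (v := (id : F → F)) hx
  rw [id] at hder
  rw [nodal_powPreimage hef hT, derivative_comp, derivative_X_pow, eval_mul, eval_mul, eval_pow,
    eval_X, eval_C, eval_comp, eval_pow, eval_X, hder]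

lemma eval_derivative_nodal_union {R : Type*} [CommRing R] [DecidableEq R] {A B : Finset R}
    (hAB : Disjoint A B) {x : R} (hx : x ∈ A) :
    (derivative (nodal (A ∪ B) id)).eval x
      = (derivative (nodal A id)).eval x * (nodal B id).eval x := by
  have hroot : (nodal A id).eval x = 0 := eval_nodal_at_node (v := id) hx
  rw [nodal, prod_union hAB, ← nodal, ← nodal, derivative_mul, eval_add, eval_mul, eval_mul, hroot,
    zero_mul, add_zero]

end PowPreimage

section SquareOrder

variable {F : Type*} [Field F] [Fintype F] {r : ℕ}

lemma isSquare_of_pow_eq_one {n : ℕ} (hn : 2 * n ∣ Fintype.card F - 1) {x : F} (hx : x ^ n = 1) :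
    IsSquare x := by
  obtain ⟨c, hc⟩ := hn
  have hcard : 1 < Fintype.card F := Fintype.one_lt_card
  have hchar : ringChar F ≠ 2 := fun h ↦ by
    have := FiniteField.even_card_of_char_two h
    rw [mul_assoc] at hc
    omega
  have hn0 : n ≠ 0 := by
    rintro rfl
    omega
  have hx0 : x ≠ 0 := by
    rintro rfl
    simp [hn0] at hx
  have hhalf : Fintype.card F / 2 = n * c := by
    rw [mul_assoc] at hc
    omega
  rw [FiniteField.isSquare_iff hchar hx0, hhalf, pow_mul, hx, one_pow]

lemma exists_ringHom_eq_pow (hF : Fintype.card F = r ^ 2) : ∃ φ : F →+* F, ∀ x, φ x = x ^ r := by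
  obtain ⟨p, _⟩ := CharP.exists F
  obtain ⟨n, hp, hcard⟩ := FiniteField.card F p
  have := Fact.mk hp
  obtain ⟨m, -, rfl⟩ := (Nat.dvd_prime_pow hp).1 (hcard ▸ hF ▸ dvd_pow_self r two_ne_zero)
  exact ⟨iterateFrobenius F p m, iterateFrobenius_def p m⟩

lemma isSquare_of_pow_eq_self (hF : Fintype.card F = r ^ 2) {x : F} (hx : x ^ r = x) :
    IsSquare x := by
  obtain rfl | hx0 := eq_or_ne x 0
  · exact IsSquare.zero
  obtain ⟨m, rfl⟩ | ⟨m, rfl⟩ := r.even_or_odd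
  · exact ⟨x ^ m, by rw [← pow_add, hx]⟩
  · refine isSquare_of_pow_eq_one (n := 2 * m) ⟨m + 1, ?_⟩ ?_
    · rw [hF]
      exact Nat.sub_eq_of_eq_add (by ring)
    · exact mul_right_cancel₀ hx0 (by rw [← pow_succ, hx, one_mul])

lemma isSquare_natCast (hF : Fintype.card F = r ^ 2) (n : ℕ) : IsSquare (n : F) := by
  obtain ⟨φ, hφ⟩ := exists_ringHom_eq_pow hF
  exact isSquare_of_pow_eq_self hF (by rw [← hφ, map_natCast])

lemma isSquare_neg_one (hF : Fintype.card F = r ^ 2) : IsSquare (-1 : F) := by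
  obtain ⟨φ, hφ⟩ := exists_ringHom_eq_pow hF
  exact isSquare_of_pow_eq_self hF (by rw [← hφ, map_neg, map_one])

lemma isSquare_eval_nodal_of_pow_eq_self (hF : Fintype.card F = r ^ 2) {T : Finset F} {y : F}
    (hT : ∀ c ∈ T, c ^ r = c) (hy : y ^ r = y) : IsSquare ((nodal T id).eval y) := by
  obtain ⟨φ, hφ⟩ := exists_ringHom_eq_pow hF
  rw [eval_nodal]
  refine isSquare_prod _ fun c hc ↦ isSquare_of_pow_eq_self hF ?_
  rw [← hφ, map_sub, hφ, hφ, id, hT c hc, hy]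

/-- On elements of norm one, `x ↦ x ^ r` is inversion, so `(y - z) ^ r = y⁻¹ - z⁻¹`. -/
lemma sub_pow_mul_mul_of_pow_succ_eq_one (hF : Fintype.card F = r ^ 2) (hr : 0 < r) {y z : F}
    (hy : y ^ (r + 1) = 1) (hz : z ^ (r + 1) = 1) (hyz : y ≠ z) :
    (y - z) ^ (r - 1) * (y * z) = -1 := by
  obtain ⟨φ, hφ⟩ := exists_ringHom_eq_pow hF
  have hfrob : (y - z) ^ (r - 1) * (y - z) = y ^ r - z ^ r := by
    rw [← pow_succ, Nat.sub_add_cancel hr, ← hφ, map_sub, hφ, hφ]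
  apply mul_right_cancel₀ (sub_ne_zero.2 hyz)
  rw [pow_succ] at hy hz
  linear_combination (y * z) * hfrob + z * hy - y * hz

lemma isSquare_eval_nodal_of_pow_half {h i j : ℕ} (hF : Fintype.card F = r ^ 2)
    (hr : r + 1 = 2 * h) {T : Finset F} {y : F} (hy : y ^ h = (-1) ^ i)
    (hT : ∀ d ∈ T, d ^ h = (-1) ^ j) (hyT : y ∉ T) (heven : Even (#T * (h + i + j))) :
    IsSquare ((nodal T id).eval y) := by
  have hnorm {u : F} {l : ℕ} (hu : u ^ h = (-1) ^ l) : u ^ (r + 1) = 1 := by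
    rw [hr, mul_comm, pow_mul, hu, pow_right_comm, neg_one_sq, one_pow]
  have hterm : ∀ d ∈ T, (y - d) ^ ((r - 1) * h) = (-1) ^ (h + i + j) := fun d hd ↦ by
    have hyd := congrArg (· ^ h) (sub_pow_mul_mul_of_pow_succ_eq_one hF (by omega) (hnorm hy)
      (hnorm (hT d hd)) (ne_of_mem_of_not_mem hd hyT).symm)
    simp only [mul_pow, hy, hT d hd, ← pow_mul] at hyd
    rw [pow_add, pow_add, ← hyd, mul_assoc, mul_assoc, mul_mul_mul_comm, ← mul_pow, ← mul_pow]
    simp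
  refine isSquare_of_pow_eq_one (n := (r - 1) * h) (dvd_of_eq ?_) ?_
  · rw [mul_left_comm, ← hr, hF, mul_comm, ← Nat.sq_sub_sq, one_pow]
  · simp only [eval_nodal, id]
    rw [← prod_pow, prod_congr rfl hterm, prod_const, ← pow_mul, mul_comm]
    exact heven.neg_one_pow

end SquareOrder

section Nodes

variable {F : Type*} [Field F] [Fintype F]

lemma isSquare_eval_derivative_nodal_union [DecidableEq F] {r e₁ e₂ f₁ f₂ : ℕ} {T₁ T₂ : Finset F}
    (hF : Fintype.card F = r ^ 2)
    (hef₁ : e₁ * f₁ = Fintype.card F - 1) (hef₂ : e₂ * f₂ = Fintype.card F - 1)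
    (hT₁ : ∀ c ∈ T₁, c ^ e₁ = 1) (hT₂ : ∀ d ∈ T₂, d ^ e₂ = 1)
    (hdisj : Disjoint (powPreimage f₁ T₁) (powPreimage f₂ T₂)) {x : F} (hx : x ^ f₁ ∈ T₁)
    (hxsq : IsSquare x) (hsq₁ : IsSquare ((nodal (T₁.erase (x ^ f₁)) id).eval (x ^ f₁)))
    (hsq₂ : IsSquare ((nodal T₂ id).eval (x ^ f₂))) :
    IsSquare ((derivative (nodal (powPreimage f₁ T₁ ∪ powPreimage f₂ T₂) id)).eval x) := by
  rw [eval_derivative_nodal_union hdisj (mem_powPreimage.2 hx),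
    eval_derivative_nodal_powPreimage hef₁ hT₁ hx, eval_nodal_powPreimage hef₂ hT₂]
  exact (((isSquare_natCast hF f₁).mul (hxsq.pow _)).mul hsq₁).mul hsq₂

lemma pow_mul_eq_of_mem_powPreimage [DecidableEq F] {D f : ℕ} {T : Finset F} {u x : F}
    (hT : ∀ c ∈ T, c ^ D = u) (hx : x ∈ powPreimage f T) : x ^ (D * f) = u := by
  rw [mul_comm, pow_mul, hT _ (mem_powPreimage.1 hx)]

lemma pow_eq_self_of_pow_eq_one {M : Type*} [Monoid M] {n r : ℕ} (hr : 0 < r) (hn : n ∣ r - 1)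
    {x : M} (hx : x ^ n = 1) : x ^ r = x := by
  obtain ⟨c, hc⟩ := hn
  rw [← Nat.sub_add_cancel hr, pow_succ, hc, pow_mul, hx, one_pow, one_mul]

/-- The set `powPreimage f₁ T₁ ∪ powPreimage f₂ T₂` is a union of cosets of the groups of `f₁`-th
and `f₂`-th roots of unity that can serve as the nodes of the code. In the paper's notation
`e₁ = g * D₁` and `e₂ = g * D₂` with `g = gcd e₁ e₂`, and `m` is `(r + 1) / (2 * D₂)`. -/
structure IsNodePair (r g D₁ D₂ f₁ f₂ m : ℕ) (T₁ T₂ : Finset F) : Prop where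
  card_eq : Fintype.card F = r ^ 2
  mul_left : g * D₁ * f₁ = r ^ 2 - 1
  mul_right : g * D₂ * f₂ = r ^ 2 - 1
  four_dvd : 4 ∣ g
  two_mul_dvd : 2 * D₁ ∣ r - 1
  add_one_eq : r + 1 = 2 * (D₂ * m)
  pow_left : ∀ c ∈ T₁, c ^ D₁ = 1
  pow_right : ∀ d ∈ T₂, d ^ D₂ = -1

namespace IsNodePair

variable {r g D₁ D₂ f₁ f₂ m : ℕ} {T₁ T₂ : Finset F} (h : IsNodePair r g D₁ D₂ f₁ f₂ m T₁ T₂)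
include h

lemma one_lt : 1 < r := by
  have hcard : 1 < Fintype.card F := Fintype.one_lt_card
  rw [h.card_eq] at hcard
  exact lt_of_pow_lt_pow_left₀ 2 r.zero_le (by rwa [one_pow])

lemma left_mul_eq_right_mul : D₁ * f₁ = D₂ * f₂ := by
  have hg : 0 < g := Nat.pos_of_ne_zero fun h0 ↦ by
    have := Nat.one_lt_pow two_ne_zero h.one_lt
    have := h.mul_left
    simp only [h0, zero_mul] at this
    omega
  refine Nat.eq_of_mul_eq_mul_left hg ?_
  rw [← mul_assoc, ← mul_assoc, h.mul_left, h.mul_right]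

lemma neg_one_ne_one : (-1 : F) ≠ 1 := by
  refine Ring.neg_one_ne_one_of_char_ne_two fun hchar ↦ ?_
  have hcard := FiniteField.even_card_of_char_two hchar
  have hodd : Odd r := ⟨D₂ * m - 1, by have := h.add_one_eq; have := h.one_lt; omega⟩
  rw [h.card_eq] at hcard
  exact Nat.not_even_iff_odd.2 hodd.pow (Nat.even_iff.2 hcard)

lemma pow_eq_self_of_mem_left {c : F} (hc : c ∈ T₁) : c ^ r = c :=
  pow_eq_self_of_pow_eq_one h.one_lt.le (dvd_of_mul_left_dvd h.two_mul_dvd) (h.pow_left c hc)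

lemma pow_half_right {d : F} (hd : d ∈ T₂) : d ^ (D₂ * m) = (-1) ^ m := by
  rw [pow_mul, h.pow_right d hd]

lemma pow_mul_left {c : F} (hc : c ∈ T₁) : c ^ (g * D₁) = 1 := by
  rw [mul_comm, pow_mul, h.pow_left c hc, one_pow]

lemma pow_mul_right {d : F} (hd : d ∈ T₂) : d ^ (g * D₂) = 1 := by
  have hg : Even g := even_iff_two_dvd.2 (dvd_trans ⟨2, rfl⟩ h.four_dvd)
  rw [mul_comm, pow_mul, h.pow_right d hd, hg.neg_one_pow]

lemma mul_left_eq_card_sub_one : g * D₁ * f₁ = Fintype.card F - 1 := by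
  rw [h.card_eq, h.mul_left]

lemma mul_right_eq_card_sub_one : g * D₂ * f₂ = Fintype.card F - 1 := by
  rw [h.card_eq, h.mul_right]

variable [DecidableEq F]

lemma pow_eq_one_of_mem_left {x : F} (hx : x ∈ powPreimage f₁ T₁) : x ^ (D₁ * f₁) = 1 :=
  pow_mul_eq_of_mem_powPreimage h.pow_left hx

lemma pow_eq_neg_one_of_mem_right {x : F} (hx : x ∈ powPreimage f₂ T₂) : x ^ (D₁ * f₁) = -1 := by
  rw [h.left_mul_eq_right_mul]
  exact pow_mul_eq_of_mem_powPreimage h.pow_right hx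

lemma disjoint : Disjoint (powPreimage f₁ T₁) (powPreimage f₂ T₂) :=
  disjoint_left.2 fun _ hx₁ hx₂ ↦ h.neg_one_ne_one <|
    (h.pow_eq_neg_one_of_mem_right hx₂).symm.trans (h.pow_eq_one_of_mem_left hx₁)

lemma pow_two_mul_eq_one {x : F} (hx : x ∈ powPreimage f₁ T₁ ∪ powPreimage f₂ T₂) :
    x ^ (2 * (D₁ * f₁)) = 1 := by
  rw [mul_comm, pow_mul, sq_eq_one_iff]
  exact (mem_union.1 hx).imp h.pow_eq_one_of_mem_left h.pow_eq_neg_one_of_mem_right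

lemma zero_notMem : 0 ∉ powPreimage f₁ T₁ ∪ powPreimage f₂ T₂ := fun h0 ↦ by
  have hpow := h.pow_two_mul_eq_one h0
  have := Nat.one_lt_pow two_ne_zero h.one_lt
  have hne : D₁ * f₁ ≠ 0 := fun hzero ↦ by
    have := h.mul_left
    rw [mul_assoc, hzero, mul_zero] at this
    omega
  simp [hne] at hpow

lemma isSquare_of_mem {x : F} (hx : x ∈ powPreimage f₁ T₁ ∪ powPreimage f₂ T₂) : IsSquare x := by
  refine isSquare_of_pow_eq_one ?_ (h.pow_two_mul_eq_one hx)
  rw [h.card_eq, ← h.mul_left, ← mul_assoc, mul_assoc g]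
  exact mul_dvd_mul_right h.four_dvd _

lemma pow_pow_eq_self_of_mem {x : F} (hx : x ∈ powPreimage f₁ T₁ ∪ powPreimage f₂ T₂) :
    (x ^ f₁) ^ r = x ^ f₁ :=
  pow_eq_self_of_pow_eq_one h.one_lt.le h.two_mul_dvd
    (by rw [← pow_mul, mul_comm, mul_assoc, h.pow_two_mul_eq_one hx])

lemma card_union : #(powPreimage f₁ T₁ ∪ powPreimage f₂ T₂) = #T₁ * f₁ + #T₂ * f₂ := by
  rw [card_union_of_disjoint h.disjoint,
    card_powPreimage h.mul_left_eq_card_sub_one fun _ ↦ h.pow_mul_left,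
    card_powPreimage h.mul_right_eq_card_sub_one fun _ ↦ h.pow_mul_right]

lemma isSquare_eval_derivative_left (heven : Even (#T₂ * (D₂ * m + m))) {x : F}
    (hx : x ∈ powPreimage f₁ T₁) :
    IsSquare ((derivative (nodal (powPreimage f₁ T₁ ∪ powPreimage f₂ T₂) id)).eval x) := by
  have hxU := mem_union_left (powPreimage f₂ T₂) hx
  have hhalf : (x ^ f₂) ^ (D₂ * m) = (-1) ^ 0 := by
    rw [← pow_mul, ← mul_assoc, mul_comm f₂, ← h.left_mul_eq_right_mul, pow_mul,
      h.pow_eq_one_of_mem_left hx, one_pow, pow_zero]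
  have hnotMem : x ^ f₂ ∉ T₂ := fun hx₂ ↦
    disjoint_left.1 h.disjoint hx (mem_powPreimage.2 hx₂)
  refine isSquare_eval_derivative_nodal_union h.card_eq h.mul_left_eq_card_sub_one
    h.mul_right_eq_card_sub_one (fun _ ↦ h.pow_mul_left) (fun _ ↦ h.pow_mul_right) h.disjoint
    (mem_powPreimage.1 hx) (h.isSquare_of_mem hxU) ?_ ?_
  · exact isSquare_eval_nodal_of_pow_eq_self h.card_eq
      (fun c hc ↦ h.pow_eq_self_of_mem_left (mem_of_mem_erase hc)) (h.pow_pow_eq_self_of_mem hxU)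
  · exact isSquare_eval_nodal_of_pow_half h.card_eq h.add_one_eq hhalf
      (fun _ ↦ h.pow_half_right) hnotMem heven

lemma isSquare_eval_derivative_right (heven : Even ((#T₂ - 1) * (D₂ * m))) {x : F}
    (hx : x ∈ powPreimage f₂ T₂) :
    IsSquare ((derivative (nodal (powPreimage f₁ T₁ ∪ powPreimage f₂ T₂) id)).eval x) := by
  have hxU := mem_union_right (powPreimage f₁ T₁) hx
  have hxT := mem_powPreimage.1 hx
  have heven' : Even (#(T₂.erase (x ^ f₂)) * (D₂ * m + m + m)) := by
    rw [card_erase_of_mem hxT, add_assoc, mul_add]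
    exact heven.add ((Even.add_self m).mul_left _)
  rw [union_comm]
  refine isSquare_eval_derivative_nodal_union h.card_eq h.mul_right_eq_card_sub_one
    h.mul_left_eq_card_sub_one (fun _ ↦ h.pow_mul_right) (fun _ ↦ h.pow_mul_left) h.disjoint.symm
    hxT (h.isSquare_of_mem hxU) ?_ ?_
  · exact isSquare_eval_nodal_of_pow_half h.card_eq h.add_one_eq (h.pow_half_right hxT)
      (fun d hd ↦ h.pow_half_right (mem_of_mem_erase hd)) (notMem_erase _ _) heven'
  · exact isSquare_eval_nodal_of_pow_eq_self h.card_eq (fun _ ↦ h.pow_eq_self_of_mem_left)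
      (h.pow_pow_eq_self_of_mem hxU)

theorem hasMDSSelfOrthogonalCode (heven : Even (#T₂ * (D₂ * m + m)))
    (heven' : Even ((#T₂ - 1) * (D₂ * m))) {k : ℕ} (hk : 1 ≤ k)
    (hkn : 2 * k ≤ #T₁ * f₁ + #T₂ * f₂ + 1) :
    HasMDSSelfOrthogonalCode F (#T₁ * f₁ + #T₂ * f₂ + 1) k := by
  rw [← h.card_union] at hkn ⊢
  refine hasMDSSelfOrthogonalCode_of_isSquare h.zero_notMem (fun _ ↦ h.isSquare_of_mem)
    (fun x hx ↦ ?_) (isSquare_neg_one h.card_eq) hk hkn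
  exact (mem_union.1 hx).elim (h.isSquare_eval_derivative_left heven)
    (h.isSquare_eval_derivative_right heven')

end IsNodePair

lemma exists_finset_card_eq_of_pow_eq {D e t : ℕ} {u : F} (heD : e * D = Fintype.card F - 1)
    (hu : u ^ e = 1) (ht : t ≤ D) : ∃ T : Finset F, #T = t ∧ ∀ x ∈ T, x ^ D = u := by
  classical
  have hcard : #(powPreimage D {u}) = D := by
    rw [card_powPreimage heD (by simpa using hu), card_singleton, one_mul]
  obtain ⟨T, hsub, hT⟩ := exists_subset_card_eq (hcard.symm ▸ ht)
  exact ⟨T, hT, fun x hx ↦ by simpa using hsub hx⟩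

variable [DecidableEq F]

theorem hasMDSSelfOrthogonalCode_of_factorization {r g D₁ D₂ f₁ f₂ m s t k : ℕ}
    (hF : Fintype.card F = r ^ 2) (hq₁ : g * D₁ * f₁ = r ^ 2 - 1) (hq₂ : g * D₂ * f₂ = r ^ 2 - 1)
    (hg : 4 ∣ g) (hD₁ : 2 * D₁ ∣ r - 1) (hm : r + 1 = 2 * (D₂ * m)) (hs : s ≤ D₁) (ht : t ≤ D₂)
    (heven : Even (t * (D₂ * m + m))) (heven' : Even ((t - 1) * (D₂ * m)))
    (hk : 1 ≤ k) (hkn : 2 * k ≤ s * f₁ + t * f₂ + 1) :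
    HasMDSSelfOrthogonalCode F (s * f₁ + t * f₂ + 1) k := by
  have hg₂ : Even g := even_iff_two_dvd.2 (dvd_trans ⟨2, rfl⟩ hg)
  obtain ⟨T₁, rfl, hT₁⟩ := exists_finset_card_eq_of_pow_eq (e := g * f₁)
    (by rw [hF, ← hq₁, mul_right_comm]) (one_pow _) hs
  obtain ⟨T₂, rfl, hT₂⟩ := exists_finset_card_eq_of_pow_eq (F := F) (e := g * f₂)
    (by rw [hF, ← hq₂, mul_right_comm]) (hg₂.mul_right _).neg_one_pow ht
  exact IsNodePair.hasMDSSelfOrthogonalCode ⟨hF, hq₁, hq₂, hg, hD₁, hm, hT₁, hT₂⟩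
    heven heven' hk hkn

end Nodes

section Factorization

lemma two_pow_dvd_gcd_of_mod_eq {a b l : ℕ} (ha : a % 2 ^ (l + 1) = 2 ^ l) (hb : 2 ^ l ∣ b) :
    2 ^ l ∣ a.gcd b :=
  Nat.dvd_gcd ((Nat.dvd_mod_iff (pow_dvd_pow 2 l.le_succ)).1 (dvd_of_eq ha.symm)) hb

lemma odd_div_gcd_of_mod_eq {a b l : ℕ} (ha : a % 2 ^ (l + 1) = 2 ^ l) (hb : 2 ^ l ∣ b) :
    Odd (a / a.gcd b) := by
  refine Nat.not_even_iff_odd.1 fun heven ↦ ?_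
  have hdvd : 2 ^ (l + 1) ∣ a := by
    rw [pow_succ, ← Nat.mul_div_cancel' (Nat.gcd_dvd_left a b)]
    exact mul_dvd_mul (two_pow_dvd_gcd_of_mod_eq ha hb) heven.two_dvd
  exact (Nat.two_pow_pos l).ne (Nat.mod_eq_zero_of_dvd hdvd ▸ ha)

lemma div_gcd_dvd_of_dvd_mul {a b c : ℕ} (ha : 0 < a) (h : a ∣ b * c) : a / a.gcd b ∣ c := by
  have hg := Nat.gcd_pos_of_pos_left b ha
  refine (Nat.coprime_div_gcd_div_gcd hg).dvd_of_dvd_mul_left ?_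
  rw [← Nat.mul_div_right_comm (Nat.gcd_dvd_right a b)]
  exact Nat.div_dvd_div (Nat.gcd_dvd_left a b) h

lemma even_mul_add_of_even_div_add_div {t g D₁ D₂ m : ℕ} (hg : 0 < g) (hD₂ : 0 < D₂) (hD₁ : Odd D₁)
    (h : Even (t * (g * D₁) * (2 * (D₂ * m)) / (2 * (g * D₂)) + t * (2 * (D₂ * m)) / 2)) :
    Even (t * (D₂ * m + m)) := by
  rw [show t * (g * D₁) * (2 * (D₂ * m)) = t * (D₁ * m) * (2 * (g * D₂)) by ring,
    Nat.mul_div_cancel _ (by positivity), mul_left_comm t 2, Nat.mul_div_cancel_left _ two_pos,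
    ← mul_add] at h
  have hD₁' := Nat.not_even_iff_odd.2 hD₁
  simp only [Nat.even_mul, Nat.even_add, hD₁', false_or] at h ⊢
  tauto

theorem mds_self_orthogonal_thm5_odd_length_succ_general {r e1 f1 e2 f2 s t l : ℕ}
    (hr_odd : Odd r) (hq1 : r ^ 2 - 1 = e1 * f1) (hq2 : r ^ 2 - 1 = e2 * f2)
    (hl : 2 ≤ l) (he1 : e1 % 2 ^ (l + 1) = 2 ^ l) (he2 : 2 ^ l ∣ e2)
    (hdvd1 : 2 * e2 ∣ e1 * (r + 1)) (hdvd2 : e1 ∣ e2 * (r - 1))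
    (hs : s ≤ e1 / Nat.gcd e1 e2) (ht : t ≤ e2 / Nat.gcd e1 e2)
    (heven1 : Even (t * e1 * (r + 1) / (2 * e2) + t * (r + 1) / 2))
    (heven2 : Even ((t - 1) * (r + 1) / 2))
    {F : Type*} [Field F] [Fintype F] [DecidableEq F] (hF : Fintype.card F = r ^ 2)
    {k : ℕ} (hk : 1 ≤ k) (hkn : 2 * k ≤ s * f1 + t * f2 + 1) :
    HasMDSSelfOrthogonalCode F (s * f1 + t * f2 + 1) k := by
  have hq : 0 < r ^ 2 - 1 := hF ▸ Nat.sub_pos_of_lt Fintype.one_lt_card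
  have he1_pos : 0 < e1 := Nat.pos_of_mul_pos_right (hq1 ▸ hq)
  have he2_pos : 0 < e2 := Nat.pos_of_mul_pos_right (hq2 ▸ hq)
  have hg_pos : 0 < e1.gcd e2 := Nat.gcd_pos_of_pos_left _ he1_pos
  have hg : 4 ∣ e1.gcd e2 := (pow_dvd_pow 2 hl).trans (two_pow_dvd_gcd_of_mod_eq he1 he2)
  have hD₁_odd : Odd (e1 / e1.gcd e2) := odd_div_gcd_of_mod_eq he1 he2
  have hD₁ : 2 * (e1 / e1.gcd e2) ∣ r - 1 :=
    (Nat.coprime_two_left.2 hD₁_odd).mul_dvd_of_dvd_of_dvd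
      (hr_odd.tsub_odd odd_one).two_dvd (div_gcd_dvd_of_dvd_mul he1_pos hdvd2)
  obtain ⟨h, hh⟩ := (hr_odd.add_odd odd_one).two_dvd
  have hD₂ : e2 / e1.gcd e2 ∣ h := by
    rw [hh, mul_left_comm] at hdvd1
    rw [Nat.gcd_comm]
    exact div_gcd_dvd_of_dvd_mul he2_pos (Nat.dvd_of_mul_dvd_mul_left two_pos hdvd1)
  obtain ⟨m, rfl⟩ := hD₂
  have he1_eq := Nat.mul_div_cancel' (Nat.gcd_dvd_left e1 e2)
  have he2_eq := Nat.mul_div_cancel' (Nat.gcd_dvd_right e1 e2)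
  generalize e1.gcd e2 = g, e1 / e1.gcd e2 = D₁, e2 / e1.gcd e2 = D₂ at *
  subst he1_eq he2_eq
  rw [hh] at heven1 heven2
  rw [mul_left_comm, Nat.mul_div_cancel_left _ two_pos] at heven2
  exact hasMDSSelfOrthogonalCode_of_factorization hF hq1.symm hq2.symm hg hD₁ hh hs ht
    (even_mul_add_of_even_div_add_div hg_pos (Nat.pos_of_mul_pos_left he2_pos) hD₁_odd heven1)
    heven2 hk hkn

end Factorization

end

/-- Theorem 5.2(3): if `(r+1)/2·(t·e₁/e₂ + t)` and `(t−1)(r+1)/2` are even and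
`n₁ = s·f₁ + t·f₂` is odd, then for `1 ≤ k ≤ (n₁+1)/2 − 1` there is a `q`-ary `[n₁+1, k]`
MDS self-orthogonal code, where `q = r²`. -/
theorem mds_self_orthogonal_thm5_odd_length_succ
    (r e1 f1 e2 f2 s t l : ℕ)
    (hr_odd : Odd r) (hr_pp : IsPrimePow r)
    (hq1 : r ^ 2 - 1 = e1 * f1) (hq2 : r ^ 2 - 1 = e2 * f2)
    (hl : 2 ≤ l) (he1 : e1 % 2 ^ (l + 1) = 2 ^ l) (he2 : 2 ^ l ∣ e2)
    (hdvd1 : 2 * e2 ∣ e1 * (r + 1)) (hdvd2 : e1 ∣ e2 * (r - 1))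
    (hs1 : 1 ≤ s) (hs2 : s ≤ e1 / Nat.gcd e1 e2)
    (ht1 : 1 ≤ t) (ht2 : t ≤ e2 / Nat.gcd e1 e2)
    (heven1 : Even (t * e1 * (r + 1) / (2 * e2) + t * (r + 1) / 2))
    (heven2 : Even ((t - 1) * (r + 1) / 2))
    (hn1 : Odd (s * f1 + t * f2))
    (F : Type*) [Field F] [Fintype F] [DecidableEq F]
    (hF : Fintype.card F = r ^ 2) :
    ∀ k : ℕ, 1 ≤ k → k ≤ (s * f1 + t * f2 + 1) / 2 - 1 →
      ∃ C : Submodule F (Fin (s * f1 + t * f2 + 1) → F),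
        Module.finrank F C = k ∧
        C ≤ dualCode C ∧
        IsMinDist C (s * f1 + t * f2 + 1 - k + 1) := by
  exact fun k hk hkn ↦ mds_self_orthogonal_thm5_odd_length_succ_general hr_odd hq1 hq2 hl he1 he2
    hdvd1 hdvd2 hs2 ht2 heven1 heven2 hF hk (by omega)
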